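/- arXiv:2505.14611 — 8 statements merged into one kernel-verified Lean document; each statement's English description precedes it below -/
import Mathlib

section
/- Suppose ρ and ψ are twice continuously differentiable in their parameters, and let ς ↦ (φ(ς), ϕ(ς)) be a twice differentiable curve. Write r(ς,ν) := ρ(φ(ς),ν) and p(ς,ν) := ψ(ϕ(ς),ν). Then at every ς the following are equivalent: (i) the geodesic system holds, i.e. for every u ∈ {1,…,P}, g_{uv}·d²φ^v/dς² + Γ_{u'v',u}·(dφ^{u'}/dς)(dφ^{v'}/dς) + Γ_{q'r',u}·(dϕ^{q'}/dς)(dϕ^{r'}/dς) = 0 (summed over repeated indices), and for every q ∈ {P+1,…,N}, g_{qr}·d²ϕ^r/dς² + Γ_{q'r',q}·(dϕ^{q'}/dς)(dϕ^{r'}/dς) + 2·Γ_{q'u',q}·(dϕ^{q'}/dς)(dφ^{u'}/dς) = 0; (ii) Σ_{ν∈B} (2/γ0(ν))·( ∂²r/∂ς² − r·(∂p/∂ς)² )·∇_φ ρ(φ(ς),ν) = 0 in ℝ^P, and Σ_{ν∈B} (2/γ0(ν))·( r²·∂²p/∂ς² + 2·r·(∂r/∂ς)·(∂p/∂ς) )·∇_ϕ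 ψ(ϕ(ς),ν) = 0 in ℝ^(N−P). -/
noncomputable section

/-- Partial derivative in the `i`-th coordinate direction. -/
def dP {n : ℕ} {E : Type*} [NormedAddCommGroup E] [NormedSpace ℝ E]
    (f : (Fin n → ℝ) → E) (x : Fin n → ℝ) (i : Fin n) : E :=
  fderiv ℝ f x (Pi.single i 1)

variable {P Q : ℕ} {B : Type*} [Fintype B]

/-- ∂ρ/∂φ^u. -/
def Drho (ρ : (Fin P → ℝ) → B → ℝ) (φ : Fin P → ℝ) (ν : B) (u : Fin P) : ℝ :=
  dP (fun φ' => ρ φ' ν) φ u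

/-- ∂²ρ/∂φ^u∂φ^v. -/
def D2rho (ρ : (Fin P → ℝ) → B → ℝ) (φ : Fin P → ℝ) (ν : B) (u v : Fin P) : ℝ :=
  dP (fun φ' => Drho ρ φ' ν v) φ u

/-- ∂ψ/∂ϕ^q. -/
def Dpsi (ψ : (Fin Q → ℝ) → B → ℝ) (ϕ : Fin Q → ℝ) (ν : B) (q : Fin Q) : ℝ :=
  dP (fun ϕ' => ψ ϕ' ν) ϕ q

/-- ∂²ψ/∂ϕ^q∂ϕ^r. -/
def D2psi (ψ : (Fin Q → ℝ) → B → ℝ) (ϕ : Fin Q → ℝ) (ν : B) (q r : Fin Q) : ℝ :=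
  dP (fun ϕ' => Dpsi ψ ϕ' ν r) ϕ q

/-- Magnitude block of the Fisher matrix. -/
def gRho (γ0 : B → ℝ) (ρ : (Fin P → ℝ) → B → ℝ) (φ : Fin P → ℝ) (u v : Fin P) : ℝ :=
  ∑ ν : B, (2 / γ0 ν) * Drho ρ φ ν u * Drho ρ φ ν v

/-- Phase block of the Fisher matrix. -/
def gPsi (γ0 : B → ℝ) (ρ : (Fin P → ℝ) → B → ℝ) (ψ : (Fin Q → ℝ) → B → ℝ)
    (φ : Fin P → ℝ) (ϕ : Fin Q → ℝ) (q r : Fin Q) : ℝ :=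
  ∑ ν : B, (2 / γ0 ν) * (ρ φ ν)^2 * Dpsi ψ ϕ ν q * Dpsi ψ ϕ ν r

/-- Christoffel symbol Γ_{u'v',u}. -/
def Γrr (γ0 : B → ℝ) (ρ : (Fin P → ℝ) → B → ℝ) (φ : Fin P → ℝ) (u' v' u : Fin P) : ℝ :=
  ∑ ν : B, (2 / γ0 ν) * Drho ρ φ ν u * D2rho ρ φ ν u' v'

/-- Christoffel symbol Γ_{q'r',u}. -/
def Γppu (γ0 : B → ℝ) (ρ : (Fin P → ℝ) → B → ℝ) (ψ : (Fin Q → ℝ) → B → ℝ)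
    (φ : Fin P → ℝ) (ϕ : Fin Q → ℝ) (q' r' : Fin Q) (u : Fin P) : ℝ :=
  -∑ ν : B, (2 / γ0 ν) * ρ φ ν * Drho ρ φ ν u * Dpsi ψ ϕ ν q' * Dpsi ψ ϕ ν r'

/-- Christoffel symbol Γ_{q'r',q}. -/
def Γppq (γ0 : B → ℝ) (ρ : (Fin P → ℝ) → B → ℝ) (ψ : (Fin Q → ℝ) → B → ℝ)
    (φ : Fin P → ℝ) (ϕ : Fin Q → ℝ) (q' r' q : Fin Q) : ℝ :=
  ∑ ν : B, (2 / γ0 ν) * (ρ φ ν)^2 * Dpsi ψ ϕ ν q * D2psi ψ ϕ ν q' r'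

/-- Christoffel symbol Γ_{q'u,q} = Γ_{uq',q}. -/
def Γpuq (γ0 : B → ℝ) (ρ : (Fin P → ℝ) → B → ℝ) (ψ : (Fin Q → ℝ) → B → ℝ)
    (φ : Fin P → ℝ) (ϕ : Fin Q → ℝ) (q' : Fin Q) (u : Fin P) (q : Fin Q) : ℝ :=
  ∑ ν : B, (2 / γ0 ν) * ρ φ ν * Drho ρ φ ν u * Dpsi ψ ϕ ν q * Dpsi ψ ϕ ν q'

/-- The geodesic system of the Fisher metric along the curve `ς ↦ (φc ς, ϕc ς)`, at `ς`. -/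
def GeodesicSystem (γ0 : B → ℝ) (ρ : (Fin P → ℝ) → B → ℝ) (ψ : (Fin Q → ℝ) → B → ℝ)
    (φc : ℝ → Fin P → ℝ) (ϕc : ℝ → Fin Q → ℝ) (ς : ℝ) : Prop :=
  (∀ u : Fin P,
    (∑ v, gRho γ0 ρ (φc ς) u v * deriv (deriv (fun t => φc t v)) ς) +
    (∑ u', ∑ v', Γrr γ0 ρ (φc ς) u' v' u *
      deriv (fun t => φc t u') ς * deriv (fun t => φc t v') ς) +
    (∑ q', ∑ r', Γppu γ0 ρ ψ (φc ς) (ϕc ς) q' r' u *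
      deriv (fun t => ϕc t q') ς * deriv (fun t => ϕc t r') ς) = 0) ∧
  (∀ q : Fin Q,
    (∑ r, gPsi γ0 ρ ψ (φc ς) (ϕc ς) q r * deriv (deriv (fun t => ϕc t r)) ς) +
    (∑ q', ∑ r', Γppq γ0 ρ ψ (φc ς) (ϕc ς) q' r' q *
      deriv (fun t => ϕc t q') ς * deriv (fun t => ϕc t r') ς) +
    2 * (∑ q', ∑ u', Γpuq γ0 ρ ψ (φc ς) (ϕc ς) q' u' q *
      deriv (fun t => ϕc t q') ς * deriv (fun t => φc t u') ς) = 0)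

theorem aux_hd {n : ℕ} (f : (Fin n → ℝ) → ℝ) (hf : Differentiable ℝ f)
    (c : ℝ → Fin n → ℝ) (hc : ∀ i, Differentiable ℝ (fun t => c t i)) (t : ℝ) :
    HasDerivAt (fun t => f (c t)) (∑ i, dP f (c t) i * deriv (fun t => c t i) t) t := by
  have h1 : HasDerivAt c (fun i => deriv (fun t => c t i) t) t :=
    hasDerivAt_pi.2 fun i => (hc i t).hasDerivAt
  have h2 := (hf (c t)).hasFDerivAt.comp_hasDerivAt t h1
  refine h2.congr_deriv ?_
  rw [pi_eq_sum_univ' (fun i => deriv (fun t => c t i) t), map_sum]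
  refine Finset.sum_congr rfl fun i _ => ?_
  rw [map_smul, smul_eq_mul, mul_comm]
  unfold dP
  congr 2

theorem aux_d2 {n : ℕ} (f : (Fin n → ℝ) → ℝ) (hf : ContDiff ℝ 2 f)
    (c : ℝ → Fin n → ℝ) (hc : ∀ i, Differentiable ℝ (fun t => c t i))
    (hc' : ∀ i, Differentiable ℝ (deriv (fun t => c t i))) (t : ℝ) :
    deriv (deriv (fun t => f (c t))) t =
      ∑ i, dP f (c t) i * deriv (deriv (fun t => c t i)) t +
      ∑ i, ∑ j, dP (fun x => dP f x j) (c t) i * deriv (fun t => c t i) t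
        * deriv (fun t => c t j) t := by
  have hd : Differentiable ℝ f := hf.differentiable (by norm_num)
  have h1 : deriv (fun t => f (c t)) =
      fun t => ∑ i, dP f (c t) i * deriv (fun t => c t i) t :=
    funext fun t => (aux_hd f hd c hc t).deriv
  have h2 : ∀ j, Differentiable ℝ (fun x => dP f x j) := fun j => by
    have : ContDiff ℝ 1 (fderiv ℝ f) := hf.fderiv_right (by norm_num)
    exact (this.differentiable (by norm_num)).clm_apply (differentiable_const _)
  have h3 : HasDerivAt (fun t => ∑ i, dP f (c t) i * deriv (fun t => c t i) t)
      (∑ j, ((∑ i, dP (fun x => dP f x j) (c t) i * deriv (fun t => c t i) t)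
        * deriv (fun t => c t j) t + dP f (c t) j * deriv (deriv (fun t => c t j)) t)) t :=
    HasDerivAt.fun_sum fun j _ =>
      (aux_hd _ (h2 j) c hc t).mul (hc' j t).hasDerivAt
  rw [h1, h3.deriv, Finset.sum_add_distrib, add_comm]
  congr 1
  simp only [Finset.sum_mul]
  exact Finset.sum_comm

/-- The geodesic system of the Fisher metric is equivalent to the reduced vector equations
combining the magnitude `r(ς,ν) = ρ(φ(ς),ν)` and the phase `p(ς,ν) = ψ(ϕ(ς),ν)`. -/
theorem stmt4 {P Q : ℕ} {B : Type*} [Fintype B] [Nonempty B]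
    (γ0 : B → ℝ) (hγ0 : ∀ ν, 0 < γ0 ν)
    (ρ : (Fin P → ℝ) → B → ℝ) (ψ : (Fin Q → ℝ) → B → ℝ)
    (hρpos : ∀ φ ν, 0 < ρ φ ν)
    (hρ : ∀ ν, ContDiff ℝ 2 (fun φ => ρ φ ν))
    (hψ : ∀ ν, ContDiff ℝ 2 (fun ϕ => ψ ϕ ν))
    (φc : ℝ → Fin P → ℝ) (ϕc : ℝ → Fin Q → ℝ)
    (hφc : ∀ v, Differentiable ℝ (fun ς => φc ς v))
    (hφc' : ∀ v, Differentiable ℝ (deriv (fun ς => φc ς v)))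
    (hϕc : ∀ q, Differentiable ℝ (fun ς => ϕc ς q))
    (hϕc' : ∀ q, Differentiable ℝ (deriv (fun ς => ϕc ς q)))
    (ς : ℝ) :
    GeodesicSystem γ0 ρ ψ φc ϕc ς ↔
      ((∀ u : Fin P,
          ∑ ν : B, (2 / γ0 ν) *
            (deriv (deriv (fun t => ρ (φc t) ν)) ς -
              ρ (φc ς) ν * (deriv (fun t => ψ (ϕc t) ν) ς)^2) *
            Drho ρ (φc ς) ν u = 0) ∧
       (∀ q : Fin Q,
          ∑ ν : B, (2 / γ0 ν) *
            ((ρ (φc ς) ν)^2 * deriv (deriv (fun t => ψ (ϕc t) ν)) ς +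
              2 * ρ (φc ς) ν * deriv (fun t => ρ (φc t) ν) ς *
                deriv (fun t => ψ (ϕc t) ν) ς) *
            Dpsi ψ (ϕc ς) ν q = 0)) := by
  have r1 : ∀ ν, deriv (fun t => ρ (φc t) ν) ς =
      ∑ i, Drho ρ (φc ς) ν i * deriv (fun t => φc t i) ς := fun ν =>
    (aux_hd _ ((hρ ν).differentiable (by norm_num)) φc hφc ς).deriv
  have p1 : ∀ ν, deriv (fun t => ψ (ϕc t) ν) ς =
      ∑ i, Dpsi ψ (ϕc ς) ν i * deriv (fun t => ϕc t i) ς := fun ν =>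
    (aux_hd _ ((hψ ν).differentiable (by norm_num)) ϕc hϕc ς).deriv
  have r2 : ∀ ν, deriv (deriv (fun t => ρ (φc t) ν)) ς =
      ∑ i, Drho ρ (φc ς) ν i * deriv (deriv (fun t => φc t i)) ς +
      ∑ i, ∑ j, D2rho ρ (φc ς) ν i j * deriv (fun t => φc t i) ς
        * deriv (fun t => φc t j) ς := fun ν =>
    aux_d2 _ (hρ ν) φc hφc hφc' ς
  have p2 : ∀ ν, deriv (deriv (fun t => ψ (ϕc t) ν)) ς =
      ∑ i, Dpsi ψ (ϕc ς) ν i * deriv (deriv (fun t => ϕc t i)) ς +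
      ∑ i, ∑ j, D2psi ψ (ϕc ς) ν i j * deriv (fun t => ϕc t i) ς
        * deriv (fun t => ϕc t j) ς := fun ν =>
    aux_d2 _ (hψ ν) ϕc hϕc hϕc' ς
  have swap2 : ∀ {m n : ℕ} (F : Fin m → Fin n → B → ℝ),
      ∑ i, ∑ j, ∑ ν, F i j ν = ∑ ν, ∑ i, ∑ j, F i j ν := by
    intro m n F
    rw [Finset.sum_comm (s := (Finset.univ : Finset B))]
    exact Finset.sum_congr rfl fun i _ => Finset.sum_comm
  unfold GeodesicSystem
  refine and_congr (forall_congr' fun u => ?_) (forall_congr' fun q => ?_)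
  · refine Eq.congr_left ?_
    simp only [gRho, Γrr, Γppu, neg_mul, Finset.sum_neg_distrib, Finset.sum_mul]
    rw [Finset.sum_comm, swap2, swap2, ← Finset.sum_neg_distrib, ← Finset.sum_add_distrib,
      ← Finset.sum_add_distrib]
    refine Finset.sum_congr rfl fun ν _ => ?_
    rw [r2, p1, sq, Finset.sum_mul_sum, mul_sub, mul_add, sub_mul, add_mul,
      sub_eq_add_neg]
    simp only [Finset.mul_sum, Finset.sum_mul]
    congr 1
    · congr 1
      · exact Finset.sum_congr rfl fun i _ => by ring
      · exact Finset.sum_congr rfl fun i _ => Finset.sum_congr rfl fun j _ => by ring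
    · congr 1
      exact Finset.sum_congr rfl fun i _ => Finset.sum_congr rfl fun j _ => by ring
  · refine Eq.congr_left ?_
    simp only [gPsi, Γppq, Γpuq, Finset.sum_mul]
    rw [Finset.sum_comm, swap2, swap2, Finset.mul_sum, ← Finset.sum_add_distrib,
      ← Finset.sum_add_distrib]
    refine Finset.sum_congr rfl fun ν _ => ?_
    have e : (2 * ρ (φc ς) ν * deriv (fun t => ρ (φc t) ν) ς * deriv (fun t => ψ (ϕc t) ν) ς)
        = 2 * ρ (φc ς) ν *
          (deriv (fun t => ψ (ϕc t) ν) ς * deriv (fun t => ρ (φc t) ν) ς) := by ring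
    rw [e, p2, p1, r1, Finset.sum_mul_sum, mul_add, mul_add, mul_add, add_mul, add_mul]
    simp only [Finset.mul_sum, Finset.sum_mul]
    congr 1
    · congr 1
      · exact Finset.sum_congr rfl fun i _ => by ring
      · exact Finset.sum_congr rfl fun i _ => Finset.sum_congr rfl fun j _ => by ring
    · exact Finset.sum_congr rfl fun i _ => Finset.sum_congr rfl fun j _ => by ring
end
end

section
/- Let ς ↦ (α(ς), ϕ(ς)) be a twice differentiable curve with α(ς) > 0, and write p(ς,ν) := Σ_{r=2}^{N} ϕ^r(ς)·ν^(r−2) for ν ∈ B. Then the reduced geodesic equations on L2(B,α) in the form 'Σ_{ν∈B} (2/γ0(ν))·( α''·ρ0(ν) − α·ρ0(ν)·(∂p/∂ς)² )·ρ0(ν) = 0 and, for every q ∈ {2,…,N}, Σ_{ν∈B} (2/γ0(ν))·ρ0(ν)²·( α²·∂²p/∂ς² + 2·α·α'·∂p/∂ς )·ν^(q−2) = 0' hold at ς if and only if: α''(ς) − α(ς)·(1/ω0)·Σ_{ν∈B} w(ν)·(∂p/∂ς(ς,ν))² = 0, and for every ν ∈ B, α(ς)·∂²p/∂ς²(ς,ν)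 + 2·α'(ς)·∂p/∂ς(ς,ν) = 0. -/
/-- The polynomial phase model `p(ς,ν) = Σ_{r} ϕ^r(ς)·ν^r` (with `M` coefficients,
indexing the coefficients of `ν^(r−2)`, `r = 2,…,N`, by `Fin M`). -/
noncomputable def pphase {M : ℕ} (ϕc : ℝ → Fin M → ℝ) (ς ν : ℝ) : ℝ :=
  ∑ r : Fin M, ϕc ς r * ν ^ (r : ℕ)

/-- Equivalence between the reduced geodesic equations on `L2(B,α)` in summed form and
their pointwise form. -/
theorem stmt8 {M : ℕ} (B : Finset ℝ) (hB : B.Nonempty)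
    (γ0 ρ0 : ℝ → ℝ) (hγ0 : ∀ ν ∈ B, 0 < γ0 ν) (hρ0 : ∀ ν ∈ B, 0 < ρ0 ν)
    (w : ℝ → ℝ) (hw : ∀ ν, w ν = 2 * (ρ0 ν)^2 / γ0 ν)
    (ω0 : ℝ) (hω0 : ω0 = ∑ ν ∈ B, w ν)
    (α : ℝ → ℝ) (hα : Differentiable ℝ α) (hα' : Differentiable ℝ (deriv α))
    (hαpos : ∀ ς, 0 < α ς)
    (ϕc : ℝ → Fin M → ℝ)
    (hϕc : ∀ r, Differentiable ℝ (fun ς => ϕc ς r))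
    (hϕc' : ∀ r, Differentiable ℝ (deriv (fun ς => ϕc ς r)))
    (ς : ℝ) :
    ((∑ ν ∈ B, (2 / γ0 ν) *
        (deriv (deriv α) ς * ρ0 ν -
          α ς * ρ0 ν * (deriv (fun t => pphase ϕc t ν) ς)^2) * ρ0 ν = 0) ∧
     (∀ q : Fin M, ∑ ν ∈ B, (2 / γ0 ν) * (ρ0 ν)^2 *
        ((α ς)^2 * deriv (deriv (fun t => pphase ϕc t ν)) ς +
          2 * α ς * deriv α ς * deriv (fun t => pphase ϕc t ν) ς) * ν ^ (q : ℕ) = 0))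
    ↔
    ((deriv (deriv α) ς -
        α ς * (1 / ω0) * ∑ ν ∈ B, w ν * (deriv (fun t => pphase ϕc t ν) ς)^2 = 0) ∧
     (∀ ν ∈ B, α ς * deriv (deriv (fun t => pphase ϕc t ν)) ς +
        2 * deriv α ς * deriv (fun t => pphase ϕc t ν) ς = 0)) := by
  have hd1 : ∀ ν, deriv (fun t => pphase ϕc t ν)
      = fun t => ∑ r : Fin M, deriv (fun s => ϕc s r) t * ν ^ (r : ℕ) := by
    intro ν
    funext t
    have h : HasDerivAt (fun t => ∑ r : Fin M, ϕc t r * ν ^ (r : ℕ))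
        (∑ r : Fin M, deriv (fun s => ϕc s r) t * ν ^ (r : ℕ)) t :=
      HasDerivAt.fun_sum fun r _ => ((hϕc r t).hasDerivAt).mul_const _
    exact h.deriv
  have hd2 : ∀ ν, deriv (deriv (fun t => pphase ϕc t ν)) ς
      = ∑ r : Fin M, deriv (deriv (fun s => ϕc s r)) ς * ν ^ (r : ℕ) := by
    intro ν
    rw [hd1]
    have h : HasDerivAt (fun t => ∑ r : Fin M, deriv (fun s => ϕc s r) t * ν ^ (r : ℕ))
        (∑ r : Fin M, deriv (deriv (fun s => ϕc s r)) ς * ν ^ (r : ℕ)) ς :=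
      HasDerivAt.fun_sum fun r _ => ((hϕc' r ς).hasDerivAt).mul_const _
    exact h.deriv
  have hf : ∃ c : Fin M → ℝ, ∀ ν, α ς * deriv (deriv (fun t => pphase ϕc t ν)) ς +
        2 * deriv α ς * deriv (fun t => pphase ϕc t ν) ς = ∑ r, c r * ν ^ (r : ℕ) := by
    refine ⟨fun r => α ς * deriv (deriv (fun s => ϕc s r)) ς
      + 2 * deriv α ς * deriv (fun s => ϕc s r) ς, fun ν => ?_⟩
    rw [hd2, hd1]
    simp only [Finset.mul_sum, ← Finset.sum_add_distrib]
    exact Finset.sum_congr rfl fun r _ => by ring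
  obtain ⟨c, hc⟩ := hf
  have hwpos : ∀ ν ∈ B, 0 < w ν := by
    intro ν hν
    have h1 := hγ0 ν hν
    have h2 := hρ0 ν hν
    rw [hw]
    positivity
  have hωpos : 0 < ω0 := hω0 ▸ Finset.sum_pos hwpos hB
  have ha := hαpos ς
  refine and_congr ?_ ?_
  · have e : ∑ ν ∈ B, (2 / γ0 ν) *
        (deriv (deriv α) ς * ρ0 ν -
          α ς * ρ0 ν * (deriv (fun t => pphase ϕc t ν) ς)^2) * ρ0 ν
        = ω0 * (deriv (deriv α) ς -
        α ς * (1 / ω0) * ∑ ν ∈ B, w ν * (deriv (fun t => pphase ϕc t ν) ς)^2) := by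
      have e2 : ω0 * (deriv (deriv α) ς -
        α ς * (1 / ω0) * ∑ ν ∈ B, w ν * (deriv (fun t => pphase ϕc t ν) ς)^2)
        = ω0 * deriv (deriv α) ς -
        α ς * ∑ ν ∈ B, w ν * (deriv (fun t => pphase ϕc t ν) ς)^2 := by
        field_simp
      rw [e2, hω0, Finset.sum_mul, Finset.mul_sum, ← Finset.sum_sub_distrib]
      refine Finset.sum_congr rfl fun ν _ => ?_
      rw [hw]
      ring
    rw [e, mul_eq_zero]
    simp [hωpos.ne']
  · have e : ∀ q : Fin M, ∑ ν ∈ B, (2 / γ0 ν) * (ρ0 ν)^2 *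
        ((α ς)^2 * deriv (deriv (fun t => pphase ϕc t ν)) ς +
          2 * α ς * deriv α ς * deriv (fun t => pphase ϕc t ν) ς) * ν ^ (q : ℕ)
        = α ς * ∑ ν ∈ B, w ν * (∑ r, c r * ν ^ (r : ℕ)) * ν ^ (q : ℕ) := by
      intro q
      rw [Finset.mul_sum]
      refine Finset.sum_congr rfl fun ν _ => ?_
      rw [← hc, hw]
      ring
    simp only [e, hc, mul_eq_zero, ha.ne', false_or]
    constructor
    · intro h
      have hs : ∑ ν ∈ B, w ν * (∑ r, c r * ν ^ (r : ℕ)) ^ 2 = 0 := by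
        calc _ = ∑ ν ∈ B, ∑ q : Fin M,
              c q * (w ν * (∑ r, c r * ν ^ (r : ℕ)) * ν ^ (q : ℕ)) := by
              refine Finset.sum_congr rfl fun ν _ => ?_
              rw [sq, ← mul_assoc]
              conv_lhs => rw [Finset.mul_sum]
              exact Finset.sum_congr rfl fun r _ => by ring
          _ = 0 := by
              rw [Finset.sum_comm]
              refine Finset.sum_eq_zero fun q _ => ?_
              rw [← Finset.mul_sum, h q, mul_zero]
      intro ν hν
      have := (Finset.sum_eq_zero_iff_of_nonneg fun ν hν =>
        mul_nonneg (hwpos ν hν).le (sq_nonneg _)).1 hs ν hν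
      rcases mul_eq_zero.1 this with h1 | h1
      · exact absurd h1 (hwpos ν hν).ne'
      · exact pow_eq_zero_iff (two_ne_zero) |>.1 h1
    · intro h q
      refine Finset.sum_eq_zero fun ν hν => ?_
      rw [h ν hν]
      ring
end

section
/- With k1, k2, K as defined from α1, α2 and δ, the arctangent identity holds: arctan( k1·(k2 + 1)/√K ) − arctan( k1·k2/√K ) = δ. Equivalently, arctan( (α2 − α1·cos δ)/(α1·sin δ) ) − arctan( (α2·cos δ − α1)/(α2·sin δ) ) = δ. -/
/-- `k1 = α1² + α2² − 2·α1·α2·cos δ`. -/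
noncomputable def k1c (α1 α2 δ : ℝ) : ℝ := α1^2 + α2^2 - 2*α1*α2*Real.cos δ

/-- `k2 = (−α1² + α1·α2·cos δ)/k1`. -/
noncomputable def k2c (α1 α2 δ : ℝ) : ℝ := (-α1^2 + α1*α2*Real.cos δ) / k1c α1 α2 δ

/-- `K = α1²·α2²·(sin δ)²`. -/
noncomputable def Kc (α1 α2 δ : ℝ) : ℝ := α1^2 * α2^2 * (Real.sin δ)^2

theorem aux_cos_sin (x y r : ℝ) (hx : 0 < x) (hr : 0 < r) (h : x^2 + y^2 = r^2) :
    Real.cos (Real.arctan (y / x)) = x / r ∧ Real.sin (Real.arctan (y / x)) = y / r := by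
  have e : Real.sqrt (1 + (y / x)^2) = r / x := by
    rw [show 1 + (y / x)^2 = (r / x)^2 by rw [div_pow, div_pow, ← h]; field_simp]
    exact Real.sqrt_sq (by positivity)
  rw [Real.cos_arctan, Real.sin_arctan, e]
  constructor <;> field_simp

theorem aux_main (α1 α2 δ : ℝ) (h1 : 0 < α1) (h2 : 0 < α2)
    (hδ : δ ∈ Set.Ioo 0 Real.pi) :
    Real.arctan ((α2 - α1 * Real.cos δ) / (α1 * Real.sin δ)) -
      Real.arctan ((α2 * Real.cos δ - α1) / (α2 * Real.sin δ)) = δ := by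
  have hs : 0 < Real.sin δ := Real.sin_pos_of_mem_Ioo hδ
  have hsc := Real.sin_sq_add_cos_sq δ
  have hk : 0 < α1^2 + α2^2 - 2*α1*α2*Real.cos δ := by
    have : 0 < (α1 * Real.sin δ)^2 := by positivity
    nlinarith [sq_nonneg (α2 - α1 * Real.cos δ)]
  set r := Real.sqrt (α1^2 + α2^2 - 2*α1*α2*Real.cos δ) with hr
  have hr0 : 0 < r := Real.sqrt_pos.mpr hk
  have hr2 : r^2 = α1^2 + α2^2 - 2*α1*α2*Real.cos δ := Real.sq_sqrt hk.le
  obtain ⟨cA, sA⟩ := aux_cos_sin (α1 * Real.sin δ) (α2 - α1 * Real.cos δ) r (by positivity) hr0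
    (by rw [hr2]; linear_combination α1^2 * hsc)
  obtain ⟨cB, sB⟩ := aux_cos_sin (α2 * Real.sin δ) (α2 * Real.cos δ - α1) r (by positivity) hr0
    (by rw [hr2]; linear_combination α2^2 * hsc)
  have hlt : (α2 * Real.cos δ - α1) / (α2 * Real.sin δ) <
      (α2 - α1 * Real.cos δ) / (α1 * Real.sin δ) := by
    rw [div_lt_div_iff₀ (by positivity) (by positivity)]
    have := mul_pos hk hs
    nlinarith
  have hlt' := Real.arctan_strictMono hlt
  apply Real.injOn_cos
  · constructor
    · linarith
    · linarith [Real.arctan_lt_pi_div_two ((α2 - α1 * Real.cos δ) / (α1 * Real.sin δ)),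
        Real.neg_pi_div_two_lt_arctan ((α2 * Real.cos δ - α1) / (α2 * Real.sin δ))]
  · exact ⟨hδ.1.le, hδ.2.le⟩
  · rw [Real.cos_sub, cA, sA, cB, sB]
    field_simp
    rw [hr2]
    linear_combination (α1 * α2) * hsc

/-- The arctangent identity satisfied by the constants of the geodesic on `L2(B,α)`. -/
theorem stmt12 (α1 α2 δ : ℝ) (h1 : 0 < α1) (h2 : 0 < α2)
    (hδ : δ ∈ Set.Ioo 0 Real.pi) :
    Real.arctan (k1c α1 α2 δ * (k2c α1 α2 δ + 1) / Real.sqrt (Kc α1 α2 δ)) -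
      Real.arctan (k1c α1 α2 δ * k2c α1 α2 δ / Real.sqrt (Kc α1 α2 δ)) = δ ∧
    Real.arctan ((α2 - α1 * Real.cos δ) / (α1 * Real.sin δ)) -
      Real.arctan ((α2 * Real.cos δ - α1) / (α2 * Real.sin δ)) = δ := by
  have hm := aux_main α1 α2 δ h1 h2 hδ
  have hs : 0 < Real.sin δ := Real.sin_pos_of_mem_Ioo hδ
  have hsc := Real.sin_sq_add_cos_sq δ
  have hk : 0 < k1c α1 α2 δ := by
    have : 0 < (α1 * Real.sin δ)^2 := by positivity
    unfold k1c
    nlinarith [sq_nonneg (α2 - α1 * Real.cos δ)]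
  have hK : Real.sqrt (Kc α1 α2 δ) = α1 * α2 * Real.sin δ := by
    rw [show Kc α1 α2 δ = (α1 * α2 * Real.sin δ)^2 by unfold Kc; ring]
    exact Real.sqrt_sq (by positivity)
  have e2 : k1c α1 α2 δ * k2c α1 α2 δ = -α1^2 + α1*α2*Real.cos δ := by
    unfold k2c
    exact mul_div_cancel₀ _ hk.ne'
  refine ⟨?_, hm⟩
  rw [mul_add, e2, hK]
  have a1 : (-α1^2 + α1*α2*Real.cos δ + k1c α1 α2 δ * 1) / (α1 * α2 * Real.sin δ) =
      (α2 - α1 * Real.cos δ) / (α1 * Real.sin δ) := by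
    unfold k1c
    field_simp
    ring
  have a2 : (-α1^2 + α1*α2*Real.cos δ) / (α1 * α2 * Real.sin δ) =
      (α2 * Real.cos δ - α1) / (α2 * Real.sin δ) := by
    field_simp
    ring
  rw [a1, a2]
  exact hm
end

section
/- With k1, k2, K and α̃ as defined from α1, α2 and δ, the quantity (α̃'(ς))² + K/α̃(ς)² equals k1 for every ς ∈ ℝ; consequently the geodesic length integral evaluates in closed form: ∫₀¹ √( (α̃'(ς))² + K/α̃(ς)² ) dς = √k1. -/
/-- `α̃(ς) = √( k1·(ς + k2)² + K/k1 )`. -/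
noncomputable def alphaT (α1 α2 δ ς : ℝ) : ℝ :=
  Real.sqrt (k1c α1 α2 δ * (ς + k2c α1 α2 δ)^2 + Kc α1 α2 δ / k1c α1 α2 δ)

/-- `(α̃')² + K/α̃²` is constantly `k1`, so the geodesic length integral is `√k1`. -/
theorem stmt14 (α1 α2 δ : ℝ) (h1 : 0 < α1) (h2 : 0 < α2)
    (hδ : δ ∈ Set.Ioo 0 Real.pi) :
    (∀ ς : ℝ, (deriv (alphaT α1 α2 δ) ς)^2 + Kc α1 α2 δ / (alphaT α1 α2 δ ς)^2
        = k1c α1 α2 δ) ∧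
    (∫ ς in (0:ℝ)..1,
        Real.sqrt ((deriv (alphaT α1 α2 δ) ς)^2 + Kc α1 α2 δ / (alphaT α1 α2 δ ς)^2))
      = Real.sqrt (k1c α1 α2 δ) := by
  have hs : 0 < Real.sin δ := Real.sin_pos_of_mem_Ioo hδ
  have hk : 0 < k1c α1 α2 δ := by
    have e : k1c α1 α2 δ = (α1 - α2 * Real.cos δ)^2 + (α2 * Real.sin δ)^2 := by
      unfold k1c
      linear_combination (-α2^2) * Real.sin_sq_add_cos_sq δ
    rw [e]
    positivity
  have hK : 0 < Kc α1 α2 δ := by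
    unfold Kc
    positivity
  have key : ∀ ς : ℝ, (deriv (alphaT α1 α2 δ) ς)^2 + Kc α1 α2 δ / (alphaT α1 α2 δ ς)^2
        = k1c α1 α2 δ := by
    intro ς
    have hd : ∀ k c K : ℝ, 0 < k → 0 < K →
        (deriv (fun x : ℝ => Real.sqrt (k * (x + c)^2 + K / k)) ς)^2
          + K / (Real.sqrt (k * (ς + c)^2 + K / k))^2 = k := by
      intro k c K hk hK
      have hA : 0 < k * (ς + c)^2 + K / k := by positivity
      have h := (((((hasDerivAt_id ς).add_const c).pow 2).const_mul k).add_const (K / k)).sqrt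
        (by simpa using hA.ne')
      have h' : deriv (fun x : ℝ => Real.sqrt (k * (x + c)^2 + K / k)) ς
          = (k * (2 * (ς + c))) / (2 * Real.sqrt (k * (ς + c)^2 + K / k)) := by
        refine h.deriv.trans ?_
        simp
      rw [h', div_pow, mul_pow 2, Real.sq_sqrt hA.le]
      have e : k * (k * (ς + c)^2 + K / k) = k^2 * (ς + c)^2 + K := by
        field_simp
      generalize k * (ς + c)^2 + K / k = A at *
      field_simp
      linear_combination -e
    exact hd _ _ _ hk hK
  refine ⟨key, ?_⟩
  simp only [key]
  simp
end

section
/- Let Δψ : B → ℝ and ψ1 : B → ℝ, assume δ := √( (1/ω0)·Σ_{ν∈B} w(ν)·Δψ(ν)² ) lies in (0, π), let α1, α2 > 0 and define k1, k2, K, α̃ accordingly. Define ψ̃(ς,ν) := ψ1(ν) + (Δψ(ν)/δ)·( arctan( k1·(ς + k2)/√K ) − arctan( k1·k2/√K ) ). Then for all ς ∈ ℝ and ν ∈ B: (a) α̃(ς)²·(∂ψ̃/∂ς)(ς,ν) = √K·Δψ(ν)/δ (a constant in ς); (b) α̃''(ς) = α̃(ς)·(1/ω0)·Σ_{ν∈B}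 w(ν)·((∂ψ̃/∂ς)(ς,ν))², i.e. the first geodesic equation of L2(B,α) holds; (c) α̃(ς)·(∂²ψ̃/∂ς²)(ς,ν) + 2·α̃'(ς)·(∂ψ̃/∂ς)(ς,ν) = 0, i.e. the second geodesic equation holds; and (d) ψ̃(0,ν) = ψ1(ν). -/
/-- The geodesic phase
`ψ̃(ς,ν) = ψ1(ν) + (Δψ(ν)/δ)·(arctan( k1(ς+k2)/√K ) − arctan( k1·k2/√K ))`. -/
noncomputable def psiT {B : Type*} (α1 α2 δ : ℝ) (ψ1 Δψ : B → ℝ) (ς : ℝ) (ν : B) : ℝ :=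
  ψ1 ν + (Δψ ν / δ) *
    (Real.arctan (k1c α1 α2 δ * (ς + k2c α1 α2 δ) / Real.sqrt (Kc α1 α2 δ)) -
      Real.arctan (k1c α1 α2 δ * k2c α1 α2 δ / Real.sqrt (Kc α1 α2 δ)))

theorem aux_k1_pos (α1 α2 δ : ℝ) (h1 : 0 < α1) (h2 : 0 < α2)
    (hs : 0 < Real.sin δ) : 0 < k1c α1 α2 δ := by
  have h : k1c α1 α2 δ = (α1 - α2 * Real.cos δ)^2 + (α2 * Real.sin δ)^2 := by
    unfold k1c
    linear_combination (-α2^2) * (Real.sin_sq_add_cos_sq δ)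
  rw [h]
  have : 0 < (α2 * Real.sin δ)^2 := by positivity
  positivity

theorem aux_alpha_sq {a b K : ℝ} (ha : 0 < a) (hK : 0 < K) (t : ℝ) :
    0 < a * (t + b)^2 + K / a := by positivity

theorem aux_alpha_deriv {a b K : ℝ} (ha : 0 < a) (hK : 0 < K) (t : ℝ) :
    HasDerivAt (fun t => Real.sqrt (a * (t + b)^2 + K / a))
      (a * (t + b) / Real.sqrt (a * (t + b)^2 + K / a)) t := by
  have hp := aux_alpha_sq (b := b) ha hK t
  have h := (((((hasDerivAt_id t).add_const b).pow 2).const_mul a).add_const (K / a)).sqrt hp.ne'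
  refine HasDerivAt.congr_deriv h ?_
  have h3 := Real.sqrt_pos.2 hp
  simp only [id, Pi.pow_apply]
  generalize Real.sqrt (a * (t + b)^2 + K / a) = s at *
  norm_num
  field_simp

theorem aux_alpha_deriv2 {a b K : ℝ} (ha : 0 < a) (hK : 0 < K) (t : ℝ) :
    HasDerivAt (fun t => a * (t + b) / Real.sqrt (a * (t + b)^2 + K / a))
      (K / (Real.sqrt (a * (t + b)^2 + K / a))^3) t := by
  have hp := aux_alpha_sq (b := b) ha hK t
  have h := (((hasDerivAt_id t).add_const b).const_mul a).div
    (aux_alpha_deriv (b := b) ha hK t) (Real.sqrt_pos.2 hp).ne'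
  refine HasDerivAt.congr_deriv h ?_
  have h3 := Real.sqrt_pos.2 hp
  have h4 := Real.sq_sqrt hp.le
  simp only [id]
  generalize Real.sqrt (a * (t + b)^2 + K / a) = s at *
  have h5 : K = a * s^2 - a^2 * (t + b)^2 := by
    rw [h4]; field_simp; ring
  rw [h5]
  field_simp

theorem aux_psi_deriv {a b K : ℝ} (ha : 0 < a) (hK : 0 < K) (p c d t : ℝ) :
    HasDerivAt (fun t => p + c * (Real.arctan (a * (t + b) / Real.sqrt K) - d))
      (c * Real.sqrt K / (Real.sqrt (a * (t + b)^2 + K / a))^2) t := by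
  have hp := aux_alpha_sq (b := b) ha hK t
  have h := ((((((hasDerivAt_id t).add_const b).const_mul a).div_const
    (Real.sqrt K)).arctan.sub_const d).const_mul c).const_add p
  refine HasDerivAt.congr_deriv h ?_
  rw [Real.sq_sqrt hp.le]
  have h3 := Real.sqrt_pos.2 hK
  have h4 := Real.sq_sqrt hK.le
  simp only [id]
  generalize Real.sqrt K = s at *
  subst h4
  field_simp
  try ring

theorem aux_psi_deriv2 {a b K : ℝ} (ha : 0 < a) (hK : 0 < K) (c t : ℝ) :
    HasDerivAt (fun t => c / (Real.sqrt (a * (t + b)^2 + K / a))^2)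
      (-2 * c * (a * (t + b) / Real.sqrt (a * (t + b)^2 + K / a))
        / (Real.sqrt (a * (t + b)^2 + K / a))^3) t := by
  have h3 := Real.sqrt_pos.2 (aux_alpha_sq (b := b) ha hK t)
  have h := (hasDerivAt_const t c).div ((aux_alpha_deriv (b := b) ha hK t).pow 2)
    (pow_pos h3 2).ne'
  refine HasDerivAt.congr_deriv h ?_
  simp only [id, Pi.pow_apply]
  generalize Real.sqrt (a * (t + b)^2 + K / a) = s at *
  norm_num
  field_simp

/-- The pair `(α̃, ψ̃)` solves the geodesic equations on `L2(B,α)` with the given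
boundary data: (a) `α̃²·∂ψ̃/∂ς` is the constant `√K·Δψ/δ`; (b) the attenuation equation;
(c) the phase equation; (d) `ψ̃(0,·) = ψ1`. -/
theorem stmt15 {B : Type*} [Fintype B] [Nonempty B]
    (γ0 ρ0 : B → ℝ) (hγ0 : ∀ ν, 0 < γ0 ν) (hρ0 : ∀ ν, 0 < ρ0 ν)
    (w : B → ℝ) (hw : ∀ ν, w ν = 2 * (ρ0 ν)^2 / γ0 ν)
    (ω0 : ℝ) (hω0 : ω0 = ∑ ν : B, w ν)
    (Δψ ψ1 : B → ℝ) (δ : ℝ)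
    (hδdef : δ = Real.sqrt ((1 / ω0) * ∑ ν : B, w ν * (Δψ ν)^2))
    (hδ : δ ∈ Set.Ioo 0 Real.pi)
    (α1 α2 : ℝ) (h1 : 0 < α1) (h2 : 0 < α2) :
    (∀ (ς : ℝ) (ν : B),
        (alphaT α1 α2 δ ς)^2 * deriv (fun t => psiT α1 α2 δ ψ1 Δψ t ν) ς
          = Real.sqrt (Kc α1 α2 δ) * Δψ ν / δ) ∧
    (∀ ς : ℝ,
        deriv (deriv (alphaT α1 α2 δ)) ς
          = alphaT α1 α2 δ ς * (1 / ω0) *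
              ∑ ν : B, w ν * (deriv (fun t => psiT α1 α2 δ ψ1 Δψ t ν) ς)^2) ∧
    (∀ (ς : ℝ) (ν : B),
        alphaT α1 α2 δ ς * deriv (deriv (fun t => psiT α1 α2 δ ψ1 Δψ t ν)) ς +
          2 * deriv (alphaT α1 α2 δ) ς * deriv (fun t => psiT α1 α2 δ ψ1 Δψ t ν) ς = 0) ∧
    (∀ ν : B, psiT α1 α2 δ ψ1 Δψ 0 ν = ψ1 ν) := by
  have hs := Real.sin_pos_of_pos_of_lt_pi hδ.1 hδ.2
  have ha := aux_k1_pos α1 α2 δ h1 h2 hs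
  have hK : 0 < Kc α1 α2 δ := by unfold Kc; positivity
  have hδ0 : 0 < δ := hδ.1
  have hal : ∀ t, 0 < alphaT α1 α2 δ t := fun t => Real.sqrt_pos.2 (aux_alpha_sq ha hK t)
  have dα : deriv (alphaT α1 α2 δ) = fun t =>
      k1c α1 α2 δ * (t + k2c α1 α2 δ) / alphaT α1 α2 δ t :=
    funext fun t => (aux_alpha_deriv ha hK t).deriv
  have ddα : ∀ t, deriv (deriv (alphaT α1 α2 δ)) t = Kc α1 α2 δ / (alphaT α1 α2 δ t)^3 := by
    intro t
    rw [dα]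
    exact (aux_alpha_deriv2 ha hK t).deriv
  have dψ : ∀ ν, deriv (fun t => psiT α1 α2 δ ψ1 Δψ t ν) = fun t =>
      (Δψ ν / δ) * Real.sqrt (Kc α1 α2 δ) / (alphaT α1 α2 δ t)^2 := fun ν =>
    funext fun t => (aux_psi_deriv ha hK _ _ _ t).deriv
  refine ⟨?_, ?_, ?_, ?_⟩
  · intro t ν
    have := hal t
    rw [dψ]
    field_simp
  · intro t
    have := hal t
    have hsum : (1 / ω0) * ∑ ν : B, w ν * (Δψ ν)^2 = δ^2 := by
      have hpos : 0 < (1 / ω0) * ∑ ν : B, w ν * (Δψ ν)^2 := by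
        rw [hδdef] at hδ0
        exact Real.sqrt_pos.1 hδ0
      conv_rhs => rw [hδdef]
      rw [Real.sq_sqrt hpos.le]
    have hsum2 : ∑ ν : B, w ν * (deriv (fun t => psiT α1 α2 δ ψ1 Δψ t ν) t)^2
        = (∑ ν : B, w ν * (Δψ ν)^2) * (Kc α1 α2 δ / (δ^2 * (alphaT α1 α2 δ t)^4)) := by
      rw [Finset.sum_mul]
      refine Finset.sum_congr rfl fun ν _ => ?_
      rw [dψ]
      simp only [div_pow, mul_pow, Real.sq_sqrt hK.le]
      field_simp
    rw [ddα, hsum2, mul_assoc, ← mul_assoc (1 / ω0), hsum]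
    field_simp
  · intro t ν
    have := hal t
    have hdd : deriv (deriv (fun t => psiT α1 α2 δ ψ1 Δψ t ν)) t =
        -2 * ((Δψ ν / δ) * Real.sqrt (Kc α1 α2 δ)) *
          (k1c α1 α2 δ * (t + k2c α1 α2 δ) / alphaT α1 α2 δ t) / (alphaT α1 α2 δ t)^3 := by
      rw [dψ]
      exact (aux_psi_deriv2 ha hK _ t).deriv
    rw [hdd, dψ, dα]
    field_simp
    ring
  · intro ν
    simp [psiT]
end

section
/- Let Δψ : B → ℝ, assume δ := √( (1/ω0)·Σ_{ν∈B} w(ν)·Δψ(ν)² ) lies in (0, π), let α1, α2 > 0, define k1, k2, K, α̃ accordingly, and set c(ν) := √K·Δψ(ν)/δ. Then the Fisher–Rao length of the geodesic on L2(B,α) evaluates in closed form: ∫₀¹ √( ω0·(α̃'(ς))² + (1/α̃(ς)²)·Σ_{ν∈B} w(ν)·c(ν)² ) dς = √(ω0·k1) = √ω0 · √( α1² + α2² − 2·α1·α2·cos δ ). -/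
/-- Closed form for the Fisher–Rao length of the geodesic on `L2(B,α)`:
`∫₀¹ √( ω0·(α̃')² + (1/α̃²)·Σ_ν w(ν)·c(ν)² ) dς = √(ω0·k1)
  = √ω0·√(α1² + α2² − 2·α1·α2·cos δ)`, with `c(ν) = √K·Δψ(ν)/δ`. -/
theorem stmt16 {B : Type*} [Fintype B] [Nonempty B]
    (γ0 ρ0 : B → ℝ) (hγ0 : ∀ ν, 0 < γ0 ν) (hρ0 : ∀ ν, 0 < ρ0 ν)
    (w : B → ℝ) (hw : ∀ ν, w ν = 2 * (ρ0 ν)^2 / γ0 ν)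
    (ω0 : ℝ) (hω0 : ω0 = ∑ ν : B, w ν)
    (Δψ : B → ℝ) (δ : ℝ)
    (hδdef : δ = Real.sqrt ((1 / ω0) * ∑ ν : B, w ν * (Δψ ν)^2))
    (hδ : δ ∈ Set.Ioo 0 Real.pi)
    (α1 α2 : ℝ) (h1 : 0 < α1) (h2 : 0 < α2)
    (c : B → ℝ) (hc : ∀ ν, c ν = Real.sqrt (Kc α1 α2 δ) * Δψ ν / δ) :
    (∫ ς in (0:ℝ)..1,
        Real.sqrt (ω0 * (deriv (alphaT α1 α2 δ) ς)^2 +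
          (1 / (alphaT α1 α2 δ ς)^2) * ∑ ν : B, w ν * (c ν)^2))
      = Real.sqrt (ω0 * k1c α1 α2 δ) ∧
    Real.sqrt (ω0 * k1c α1 α2 δ)
      = Real.sqrt ω0 * Real.sqrt (α1^2 + α2^2 - 2*α1*α2*Real.cos δ) := by
  obtain ⟨hd0, hdpi⟩ := hδ
  have hwpos : ∀ ν, 0 < w ν := fun ν => by
    rw [hw]
    have := hγ0 ν
    have := hρ0 ν
    positivity
  have hω : 0 < ω0 := by
    rw [hω0]
    exact Finset.sum_pos (fun ν _ => hwpos ν) Finset.univ_nonempty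
  have hsin : 0 < Real.sin δ := Real.sin_pos_of_pos_of_lt_pi hd0 hdpi
  have hK : 0 < Kc α1 α2 δ := by
    unfold Kc
    positivity
  have hk : 0 < k1c α1 α2 δ := by
    have e : k1c α1 α2 δ = (α1 - α2 * Real.cos δ)^2 + (α2 * Real.sin δ)^2 := by
      unfold k1c
      linear_combination (-α2^2) * Real.sin_sq_add_cos_sq δ
    rw [e]
    positivity
  have hS0 : 0 ≤ ∑ ν : B, w ν * (Δψ ν)^2 :=
    Finset.sum_nonneg (fun ν _ => mul_nonneg (hwpos ν).le (sq_nonneg _))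
  have hS : ∑ ν : B, w ν * (Δψ ν)^2 = ω0 * δ^2 := by
    have h : δ^2 = (1 / ω0) * ∑ ν : B, w ν * (Δψ ν)^2 := by
      conv_lhs => rw [hδdef]
      exact Real.sq_sqrt (by positivity)
    rw [h]
    field_simp
  have hC : ∑ ν : B, w ν * (c ν)^2 = ω0 * Kc α1 α2 δ := by
    have h : ∀ ν, w ν * (c ν)^2 = (Kc α1 α2 δ / δ^2) * (w ν * (Δψ ν)^2) := fun ν => by
      rw [hc, div_pow, mul_pow, Real.sq_sqrt hK.le]
      ring
    simp_rw [h]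
    rw [← Finset.mul_sum, hS]
    field_simp
  refine ⟨?_, ?_⟩
  · have hint : ∀ ς : ℝ, Real.sqrt (ω0 * (deriv (alphaT α1 α2 δ) ς)^2 +
          (1 / (alphaT α1 α2 δ ς)^2) * ∑ ν : B, w ν * (c ν)^2)
          = Real.sqrt (ω0 * k1c α1 α2 δ) := by
      intro ς
      rw [hC]
      have hA : 0 < k1c α1 α2 δ * (ς + k2c α1 α2 δ)^2 + Kc α1 α2 δ / k1c α1 α2 δ := by
        positivity
      have hder : HasDerivAt (alphaT α1 α2 δ)
          ((k1c α1 α2 δ * (2 * (ς + k2c α1 α2 δ))) / (2 * alphaT α1 α2 δ ς)) ς := by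
        have h0 : HasDerivAt (fun x : ℝ => k1c α1 α2 δ * (x + k2c α1 α2 δ)^2
            + Kc α1 α2 δ / k1c α1 α2 δ) (k1c α1 α2 δ * (2 * (ς + k2c α1 α2 δ))) ς := by
          have := ((((hasDerivAt_id ς).add_const (k2c α1 α2 δ)).pow 2).const_mul
            (k1c α1 α2 δ)).add_const (Kc α1 α2 δ / k1c α1 α2 δ)
          simpa using this
        exact h0.sqrt hA.ne'
      have hsq : (alphaT α1 α2 δ ς)^2
          = k1c α1 α2 δ * (ς + k2c α1 α2 δ)^2 + Kc α1 α2 δ / k1c α1 α2 δ :=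
        Real.sq_sqrt hA.le
      rw [hder.deriv, div_pow, mul_pow 2 (alphaT α1 α2 δ ς), hsq]
      congr 1
      generalize k1c α1 α2 δ = k at *
      generalize Kc α1 α2 δ = K at *
      generalize ς + k2c α1 α2 δ = x at *
      have hA' : k * x^2 + K / k = (k^2 * x^2 + K) / k := by
        field_simp
      have hp : 0 < k^2 * x^2 + K := by positivity
      rw [hA']
      field_simp
      try ring
    simp_rw [hint]
    simp
  · rw [Real.sqrt_mul hω.le]
    rfl
end

section
/- Let w : B → ℝ with w(ν) > 0, ω0 := Σ_{ν∈B} w(ν), and let Δψ : B → ℝ satisfy |Δψ(ν)| ≤ π for all ν ∈ B. Then (1/ω0)·Σ_{ν∈B} w(ν)·cos(Δψ(ν)) ≥ cos( √( (1/ω0)·Σ_{ν∈B} w(ν)·Δψ(ν)² ) ). Consequently, for every γ > 0, the Fisher–Rao distance on the full manifold is no larger than that on the submanifold: √( γ² + 1 − 2·γ·(1/ω0)·Σ w(ν)·cos(Δψ(ν)) ) ≤ √( γ² + 1 − 2·γ·cos( √( (1/ω0)·Σ w(ν)·Δψ(ν)² ) ) ), i.e. d_{L2,B} ≤ d_{L2,B,α}.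 -/
theorem cos_sqrt_convex_aux :
    ConvexOn ℝ (Set.Icc 0 (Real.pi ^ 2)) (fun x => Real.cos (Real.sqrt x)) := by
  have hd : ∀ x ∈ Set.Ioo (0 : ℝ) (Real.pi ^ 2),
      HasDerivAt (fun x => Real.cos (Real.sqrt x))
        (-Real.sin (Real.sqrt x) * (1 / (2 * Real.sqrt x))) x := fun x hx =>
    (Real.hasDerivAt_sqrt hx.1.ne').cos
  refine MonotoneOn.convexOn_of_deriv (convex_Icc _ _) ?_ ?_ ?_
  · exact (Real.continuous_cos.comp Real.continuous_sqrt).continuousOn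
  · rw [interior_Icc]
    exact fun x hx => (hd x hx).differentiableAt.differentiableWithinAt
  · rw [interior_Icc]
    intro x hx y hy hxy
    rw [(hd x hx).deriv, (hd y hy).deriv]
    have ha : 0 < Real.sqrt x := Real.sqrt_pos.2 hx.1
    have hb : 0 < Real.sqrt y := Real.sqrt_pos.2 hy.1
    have hab : Real.sqrt x ≤ Real.sqrt y := Real.sqrt_le_sqrt hxy
    have hbpi : Real.sqrt y ≤ Real.pi := by
      rw [Real.sqrt_le_left Real.pi_pos.le]
      exact hy.2.le
    generalize Real.sqrt x = a at *
    generalize Real.sqrt y = b at *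
    have h := strictConcaveOn_sin_Icc.concaveOn.2
      (show b ∈ Set.Icc 0 Real.pi from ⟨hb.le, hbpi⟩)
      (show (0 : ℝ) ∈ Set.Icc 0 Real.pi from ⟨le_rfl, Real.pi_pos.le⟩)
      (show 0 ≤ a / b by positivity)
      (show 0 ≤ 1 - a / b by rw [sub_nonneg, div_le_one hb]; exact hab) (by ring)
    simp only [smul_eq_mul, Real.sin_zero, mul_zero, add_zero] at h
    rw [div_mul_cancel₀ _ hb.ne'] at h
    have h2 : a * Real.sin b ≤ b * Real.sin a := by
      have := mul_le_mul_of_nonneg_left h hb.le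
      have e : b * (a / b * Real.sin b) = a * Real.sin b := by field_simp
      linarith
    have h3 : Real.sin b / (2 * b) ≤ Real.sin a / (2 * a) := by
      rw [div_le_div_iff₀ (by positivity) (by positivity)]
      linarith
    calc -Real.sin a * (1 / (2 * a)) = -(Real.sin a / (2 * a)) := by ring
      _ ≤ -(Real.sin b / (2 * b)) := neg_le_neg h3
      _ = _ := by ring

/-- Jensen-type inequality for the phases: the weighted mean of `cos∘Δψ` dominates
`cos` of the weighted quadratic mean of `Δψ`; consequently, the Fisher–Rao distance on
the full manifold `L2(B)` is no larger than that on the submanifold `L2(B,α)`. -/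
theorem stmt18 {B : Type*} [Fintype B] [Nonempty B]
    (w : B → ℝ) (hw : ∀ ν, 0 < w ν)
    (ω0 : ℝ) (hω0 : ω0 = ∑ ν : B, w ν)
    (Δψ : B → ℝ) (hΔψ : ∀ ν, |Δψ ν| ≤ Real.pi) :
    ((1 / ω0) * ∑ ν : B, w ν * Real.cos (Δψ ν)
        ≥ Real.cos (Real.sqrt ((1 / ω0) * ∑ ν : B, w ν * (Δψ ν)^2))) ∧
    (∀ γ : ℝ, 0 < γ →
      Real.sqrt (γ^2 + 1 - 2 * γ * ((1 / ω0) * ∑ ν : B, w ν * Real.cos (Δψ ν)))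
        ≤ Real.sqrt (γ^2 + 1 -
            2 * γ * Real.cos (Real.sqrt ((1 / ω0) * ∑ ν : B, w ν * (Δψ ν)^2)))) := by
  have hpos : 0 < ω0 := by
    rw [hω0]
    exact Finset.sum_pos (fun ν _ => hw ν) Finset.univ_nonempty
  have main : Real.cos (Real.sqrt ((1 / ω0) * ∑ ν : B, w ν * (Δψ ν)^2))
      ≤ (1 / ω0) * ∑ ν : B, w ν * Real.cos (Δψ ν) := by
    have h := cos_sqrt_convex_aux.map_sum_le (t := Finset.univ)
      (w := fun ν => 1 / ω0 * w ν) (p := fun ν => (Δψ ν)^2)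
      (fun ν _ => by have := hw ν; positivity)
      (by rw [← Finset.mul_sum, ← hω0]; field_simp)
      (fun ν _ => ⟨sq_nonneg _, by
        rw [← sq_abs]
        exact pow_le_pow_left₀ (abs_nonneg _) (hΔψ ν) 2⟩)
    simpa only [smul_eq_mul, Real.sqrt_sq_eq_abs, Real.cos_abs, mul_assoc, ← Finset.mul_sum]
      using h
  refine ⟨main, fun γ hγ => Real.sqrt_le_sqrt ?_⟩
  have := mul_le_mul_of_nonneg_left main (show 0 ≤ 2 * γ by positivity)
  linarith
end

section
/- Let w : B → ℝ with w(ν) > 0, ω0 := Σ_{ν∈B} w(ν), and let Δψ : B → ℝ satisfy |Δψ(ν)| ≤ π for all ν ∈ B. If there exist ν, ν' ∈ B with Δψ(ν)² ≠ Δψ(ν')², then the inequality is strict: (1/ω0)·Σ_{ν∈B} w(ν)·cos(Δψ(ν)) > cos( √( (1/ω0)·Σ_{ν∈B} w(ν)·Δψ(ν)² ) ). Consequently for every γ > 0 the Fisher–Rao distance on the submanifold strictly exceeds that on the full manifold, d_{L2,B,α} > d_{L2,B}, so the submanifold L2(B,α) is not a fully geodesic submanifold of L2(B). -/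
lemma aux_strictConvex : StrictConvexOn ℝ (Set.Icc 0 (Real.pi^2)) (fun x => Real.cos (Real.sqrt x)) := by
  apply StrictMonoOn.strictConvexOn_of_deriv (convex_Icc _ _)
  · exact (Real.continuous_cos.comp Real.continuous_sqrt).continuousOn
  · rw [interior_Icc]
    have hd : ∀ x : ℝ, 0 < x → deriv (fun x => Real.cos (Real.sqrt x)) x
        = -(Real.sin (Real.sqrt x) / Real.sqrt x) / 2 := by
      intro x hx
      have h := (Real.hasDerivAt_sqrt hx.ne').cos
      rw [h.deriv]
      have := Real.sqrt_pos.2 hx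
      field_simp
    intro x hx y hy hxy
    rw [hd x hx.1, hd y hy.1]
    have h0 : 0 < Real.sqrt x := Real.sqrt_pos.2 hx.1
    have h1 : Real.sqrt x < Real.sqrt y := Real.sqrt_lt_sqrt hx.1.le hxy
    have h2 : Real.sqrt y < Real.pi := by
      rw [Real.sqrt_lt' Real.pi_pos]; exact hy.2
    have h := strictConcaveOn_sin_Icc.slope_anti_adjacent (x := 0) (y := Real.sqrt x)
      (z := Real.sqrt y) ⟨le_rfl, Real.pi_pos.le⟩ ⟨(h0.trans h1).le, h2.le⟩ h0 h1
    simp only [Real.sin_zero, sub_zero] at h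
    rw [div_lt_div_iff₀ (by linarith) h0] at h
    have : Real.sin (Real.sqrt y) / Real.sqrt y < Real.sin (Real.sqrt x) / Real.sqrt x := by
      rw [div_lt_div_iff₀ (by linarith) h0]
      linarith
    linarith

/-- Strict version: if the squared phase differences are not all equal, the Jensen-type
inequality is strict, so the Fisher–Rao distance on the submanifold `L2(B,α)` strictly
exceeds that on `L2(B)` — the submanifold is not fully geodesic. -/
theorem stmt19 {B : Type*} [Fintype B] [Nonempty B]
    (w : B → ℝ) (hw : ∀ ν, 0 < w ν)
    (ω0 : ℝ) (hω0 : ω0 = ∑ ν : B, w ν)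
    (Δψ : B → ℝ) (hΔψ : ∀ ν, |Δψ ν| ≤ Real.pi)
    (hne : ∃ ν ν' : B, (Δψ ν)^2 ≠ (Δψ ν')^2) :
    ((1 / ω0) * ∑ ν : B, w ν * Real.cos (Δψ ν)
        > Real.cos (Real.sqrt ((1 / ω0) * ∑ ν : B, w ν * (Δψ ν)^2))) ∧
    (∀ γ : ℝ, 0 < γ →
      Real.sqrt (γ^2 + 1 - 2 * γ * ((1 / ω0) * ∑ ν : B, w ν * Real.cos (Δψ ν)))
        < Real.sqrt (γ^2 + 1 -
            2 * γ * Real.cos (Real.sqrt ((1 / ω0) * ∑ ν : B, w ν * (Δψ ν)^2)))) := by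
  have hpos : 0 < ω0 := by
    rw [hω0]; exact Finset.sum_pos (fun i _ => hw i) Finset.univ_nonempty
  have key : (1 / ω0) * ∑ ν : B, w ν * Real.cos (Δψ ν)
        > Real.cos (Real.sqrt ((1 / ω0) * ∑ ν : B, w ν * (Δψ ν)^2)) := by
    obtain ⟨a, b, hab⟩ := hne
    have h := aux_strictConvex.map_sum_lt (t := Finset.univ) (w := fun ν => 1 / ω0 * w ν)
      (p := fun ν => (Δψ ν)^2) (fun i _ => mul_pos (by positivity) (hw i))
      (by rw [← Finset.mul_sum, ← hω0]; field_simp)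
      (fun i _ => ⟨sq_nonneg _, sq_le_sq.2 (by
        rw [abs_of_pos Real.pi_pos]; exact hΔψ i)⟩)
      ⟨a, Finset.mem_univ _, b, Finset.mem_univ _, hab⟩
    simpa only [smul_eq_mul, Real.sqrt_sq_eq_abs, Real.cos_abs, mul_assoc, ← Finset.mul_sum] using h
  refine ⟨key, fun γ hγ => Real.sqrt_lt_sqrt ?_ ?_⟩
  · have h1 : (1 / ω0) * ∑ ν : B, w ν * Real.cos (Δψ ν) ≤ 1 := by
      rw [one_div_mul_eq_div, div_le_one hpos, hω0]
      exact Finset.sum_le_sum fun i _ => mul_le_of_le_one_right (hw i).le (Real.cos_le_one _)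
    nlinarith [sq_nonneg (γ - 1), mul_le_mul_of_nonneg_left h1 hγ.le]
  · have := mul_lt_mul_of_pos_left key hγ
    linarith
end
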